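/- arXiv:2407.18165 — 9 statements merged into one kernel-verified Lean document; each statement's English description precedes it below -/
import Mathlib

section
/- Let γ > 1, K > 0, C₁ ≠ 0, l ∈ ℝ and C₂ ∈ ℝ be constants, and let V : (0,∞) → ℝ. Suppose ρ, v : (0,∞) → ℝ satisfy ρ(r) > 0 for all r > 0, and with the local sound speed defined by c(r)² = K γ ρ(r)^{γ−1}, suppose for every r > 0 the mass-flux relation r ρ(r) v(r) = C₁ and the Bernoulli relation (1/2) v(r)² + l²/(2r²) + c(r)²/(γ−1) + V(r) = C₂ hold. Then V(r) tends to −∞ as r → 0⁺. -/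
open Filter

/-!
As `r → 0⁺` the flux density `ρ v = C₁ / r` blows up, so at each small radius `ρ` or `|v|` is
large, although which of the two may change with `r`. Either way the sum of the kinetic energy and
the enthalpy is large, since both are bounded below and grow without bound in their own argument.
The centrifugal term only helps, and Bernoulli's relation sends `V` to `-∞`.
-/

open scoped Topology

section Growth

variable {ι : Type*} {L : Filter ι}

theorem tendsto_max_abs_atTop_of_abs_mul {R : Type*} [Ring R] [LinearOrder R]
    [IsStrictOrderedRing R] {f g : ι → R} (hfg : Tendsto (fun i => |f i * g i|) L atTop) :
    Tendsto (fun i => max |f i| |g i|) L atTop := by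
  refine tendsto_atTop.2 fun b => ?_
  filter_upwards [hfg.eventually_ge_atTop (b * b)] with i hi
  by_contra! hlt
  obtain ⟨hf, hg⟩ := max_lt_iff.1 hlt
  rw [abs_mul] at hi
  exact hi.not_gt (mul_lt_mul'' hf hg (abs_nonneg _) (abs_nonneg _))

theorem tendsto_comp_add_comp_atTop_of_max {α G : Type*} [LinearOrder α] [Nonempty α]
    [AddCommGroup G] [LinearOrder G] [IsOrderedAddMonoid G] {f g : ι → α} {φ ψ : α → G}
    (hφ : Tendsto φ atTop atTop) (hψ : Tendsto ψ atTop atTop)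
    (hφf : IsBoundedUnder (· ≥ ·) L (φ ∘ f)) (hψg : IsBoundedUnder (· ≥ ·) L (ψ ∘ g))
    (hfg : Tendsto (fun i => max (f i) (g i)) L atTop) :
    Tendsto (fun i => φ (f i) + ψ (g i)) L atTop := by
  obtain ⟨a, ha⟩ := hφf.eventually_ge
  obtain ⟨b, hb⟩ := hψg.eventually_ge
  refine tendsto_atTop.2 fun M => ?_
  obtain ⟨T, hT⟩ := eventually_atTop.1
    ((hφ.eventually_ge_atTop (M - b)).and (hψ.eventually_ge_atTop (M - a)))
  filter_upwards [ha, hb, hfg.eventually_ge_atTop T] with i hai hbi hTi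
  rcases le_max_iff.1 hTi with hf | hg
  · exact sub_add_cancel M b ▸ add_le_add (hT _ hf).1 hbi
  · exact add_sub_cancel a M ▸ add_le_add hai (hT _ hg).2

end Growth

section Barotropic

variable {h ρ v : ℝ → ℝ}

theorem tendsto_abs_mul_atTop_of_mass_flux {C₁ : ℝ} (hC₁ : C₁ ≠ 0)
    (hmass : ∀ᶠ r in 𝓝[>] 0, r * ρ r * v r = C₁) :
    Tendsto (fun r => |ρ r * v r|) (𝓝[>] 0) atTop := by
  refine (tendsto_inv_nhdsGT_zero.const_mul_atTop (abs_pos.2 hC₁)).congr' ?_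
  filter_upwards [hmass, self_mem_nhdsWithin] with r hr (hr0 : 0 < r)
  rw [← hr, mul_assoc, abs_mul, abs_of_pos hr0]
  field_simp

theorem tendsto_kinetic_add_enthalpy_atTop {L : Filter ℝ}
    (hbdd : BddBelow (h '' Set.Ioi 0)) (htop : Tendsto h atTop atTop)
    (hρ : ∀ᶠ r in L, 0 < ρ r) (hflux : Tendsto (fun r => |ρ r * v r|) L atTop) :
    Tendsto (fun r => (1 / 2) * v r ^ 2 + h (ρ r)) L atTop := by
  have hlarge : Tendsto (fun r => max |v r| |ρ r|) L atTop :=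
    tendsto_max_abs_atTop_of_abs_mul (by simpa only [mul_comm] using hflux)
  have hkin : Tendsto (fun w : ℝ => (1 / 2) * w ^ 2) atTop atTop :=
    (tendsto_pow_atTop two_ne_zero).const_mul_atTop one_half_pos
  have hkin_bdd : IsBoundedUnder (· ≥ ·) L ((fun w : ℝ => (1 / 2) * w ^ 2) ∘ fun r => |v r|) :=
    isBoundedUnder_of ⟨0, fun r => by dsimp only [Function.comp]; positivity⟩
  have henth_bdd : IsBoundedUnder (· ≥ ·) L (h ∘ fun r => |ρ r|) := by
    obtain ⟨m, hm⟩ := hbdd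
    exact isBoundedUnder_of_eventually_ge <|
      hρ.mono fun r hr => hm (Set.mem_image_of_mem h (abs_pos.2 hr.ne'))
  refine (tendsto_comp_add_comp_atTop_of_max hkin htop hkin_bdd henth_bdd hlarge).congr' ?_
  filter_upwards [hρ] with r hr
  rw [sq_abs, abs_of_pos hr]

theorem external_potential_diverges_general {C₁ l C₂ : ℝ} {V : ℝ → ℝ} (hC₁ : C₁ ≠ 0)
    (hbdd : BddBelow (h '' Set.Ioi 0)) (htop : Tendsto h atTop atTop)
    (hρ : ∀ᶠ r in 𝓝[>] 0, 0 < ρ r) (hmass : ∀ᶠ r in 𝓝[>] 0, r * ρ r * v r = C₁)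
    (hbern : ∀ᶠ r in 𝓝[>] 0,
      (1 / 2) * v r ^ 2 + l ^ 2 / (2 * r ^ 2) + h (ρ r) + V r = C₂) :
    Tendsto V (𝓝[>] 0) atBot := by
  have henergy : Tendsto (fun r => (1 / 2) * v r ^ 2 + h (ρ r)) (𝓝[>] 0) atTop :=
    tendsto_kinetic_add_enthalpy_atTop hbdd htop hρ (tendsto_abs_mul_atTop_of_mass_flux hC₁ hmass)
  have hbound : Tendsto (fun r => C₂ - ((1 / 2) * v r ^ 2 + h (ρ r))) (𝓝[>] 0) atBot :=
    tendsto_atBot_add_const_left _ C₂ (tendsto_neg_atTop_atBot.comp henergy)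
  refine tendsto_atBot_mono' _ ?_ hbound
  filter_upwards [hbern] with r hr
  have hcentrifugal : 0 ≤ l ^ 2 / (2 * r ^ 2) := by positivity
  linarith

end Barotropic

/-- The specific enthalpy `c² / (γ - 1)` of a polytropic fluid `p = K ρ ^ γ` at density `ρ`, with
the sound speed eliminated by `c² = K γ ρ ^ (γ - 1)`. At `γ = 1` it takes the junk value `0`. -/
noncomputable def polytropicEnthalpy (K γ ρ : ℝ) : ℝ :=
  K * γ * ρ ^ (γ - 1) / (γ - 1)

section Polytropic

variable {K γ : ℝ}

theorem bddBelow_polytropicEnthalpy_image (hγ : 1 < γ) (hK : 0 ≤ K) :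
    BddBelow (polytropicEnthalpy K γ '' Set.Ioi 0) := by
  refine ⟨0, Set.forall_mem_image.2 fun ρ (hρ : 0 < ρ) => ?_⟩
  have : 0 < γ - 1 := sub_pos.2 hγ
  unfold polytropicEnthalpy
  positivity

theorem tendsto_polytropicEnthalpy_atTop (hγ : 1 < γ) (hK : 0 < K) :
    Tendsto (polytropicEnthalpy K γ) atTop atTop :=
  have hγ' : 0 < γ - 1 := sub_pos.2 hγ
  ((tendsto_rpow_atTop hγ').const_mul_atTop (by positivity)).atTop_div_const hγ'

end Polytropic

/-- Theorem 2: a steady axisymmetric physical flow with nonzero mass flow rate on the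
maximal domain `r > 0` forces the external potential to diverge to `-∞` at the origin. -/
theorem external_potential_diverges (γ K C₁ l C₂ : ℝ) (hγ : 1 < γ) (hK : 0 < K)
    (hC₁ : C₁ ≠ 0) (V ρ v c : ℝ → ℝ)
    (hρ : ∀ r ∈ Set.Ioi (0 : ℝ), 0 < ρ r)
    (hc : ∀ r ∈ Set.Ioi (0 : ℝ), (c r) ^ 2 = K * γ * ρ r ^ (γ - 1))
    (hmass : ∀ r ∈ Set.Ioi (0 : ℝ), r * ρ r * v r = C₁)
    (hbern : ∀ r ∈ Set.Ioi (0 : ℝ),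
      (1 / 2) * (v r) ^ 2 + l ^ 2 / (2 * r ^ 2) + (c r) ^ 2 / (γ - 1) + V r = C₂) :
    Tendsto V (nhdsWithin 0 (Set.Ioi 0)) atBot := by
  have hbern_enthalpy : ∀ r ∈ Set.Ioi (0 : ℝ),
      (1 / 2) * v r ^ 2 + l ^ 2 / (2 * r ^ 2) + polytropicEnthalpy K γ (ρ r) + V r = C₂ :=
    fun r hr => by rw [polytropicEnthalpy, ← hc r hr, hbern r hr]
  exact external_potential_diverges_general hC₁
    (bddBelow_polytropicEnthalpy_image hγ hK.le) (tendsto_polytropicEnthalpy_atTop hγ hK)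
    (eventually_mem_nhdsWithin.mono hρ) (eventually_mem_nhdsWithin.mono hmass)
    (eventually_mem_nhdsWithin.mono hbern_enthalpy)
end

section
/- Let γ > 1, K > 0, C₁ ≠ 0, l ∈ ℝ, C₂ ∈ ℝ and R > 0, and let V : (0,R) → ℝ. Suppose ρ, v : (0,R) → ℝ satisfy ρ(r) > 0 for all r ∈ (0,R), and with c(r)² = K γ ρ(r)^{γ−1}, suppose for every r ∈ (0,R) that r ρ(r) v(r) = C₁ and (1/2) v(r)² + l²/(2r²) + c(r)²/(γ−1) + V(r) = C₂. Then V(r) tends to −∞ as r → 0⁺. -/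
open Filter

/-!
Conservation of mass gives `ρ |v| = |C₁| / r`, which blows up at the axis. The density and the
speed therefore cannot both stay bounded, so the enthalpy plus the kinetic energy, a sum of
nonnegative quantities each growing without bound with one of the two, tends to `+∞`. The
centrifugal term only adds to this sum, and Bernoulli's law leaves `V` to compensate for it.
-/

open scoped Topology

theorem tendsto_comp_add_comp_atTop_of_tendsto_mul_atTop {α 𝕜 M : Type*} {F : Filter α}
    [Semiring 𝕜] [LinearOrder 𝕜] [IsStrictOrderedRing 𝕜]
    [AddCommMonoid M] [Preorder M] [AddLeftMono M]
    {Φ Ψ : 𝕜 → M} {f g : α → 𝕜}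
    (hΦ : Tendsto Φ atTop atTop) (hΨ : Tendsto Ψ atTop atTop)
    (hΦ_nonneg : ∀ x, 0 ≤ x → 0 ≤ Φ x) (hΨ_nonneg : ∀ y, 0 ≤ y → 0 ≤ Ψ y)
    (hf : ∀ᶠ i in F, 0 ≤ f i) (hg : ∀ᶠ i in F, 0 ≤ g i)
    (hfg : Tendsto (fun i ↦ f i * g i) F atTop) :
    Tendsto (fun i ↦ Φ (f i) + Ψ (g i)) F atTop := by
  refine tendsto_atTop.2 fun m ↦ ?_
  obtain ⟨a, ha, hΦa⟩ :=
    ((eventually_ge_atTop 0).and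
      (eventually_forall_ge_atTop.2 (hΦ.eventually_ge_atTop m))).exists
  obtain ⟨b, hΨb⟩ := (hΨ.eventually_ge_atTop m).exists_forall_of_atTop
  filter_upwards [hf, hg, hfg.eventually_gt_atTop (a * b)] with i hfi hgi hab
  have hlarge : a ≤ f i ∨ b ≤ g i := by
    by_contra! ⟨hfa, hgb⟩
    exact hab.not_ge (mul_le_mul hfa.le hgb.le hgi ha)
  rcases hlarge with hfa | hgb
  · exact le_add_of_le_of_nonneg (hΦa _ hfa) (hΨ_nonneg _ hgi)
  · exact le_add_of_nonneg_of_le (hΦ_nonneg _ hfi) (hΨb _ hgb)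

theorem tendsto_cobounded_of_mul_eq_const {α 𝕜 : Type*} {F : Filter α} [NormedDivisionRing 𝕜]
    {f g : α → 𝕜} {C : 𝕜} (hC : C ≠ 0) (hf : Tendsto f F (𝓝[≠] 0))
    (hfg : ∀ᶠ i in F, f i * g i = C) :
    Tendsto g F (Bornology.cobounded 𝕜) := by
  have hinv : Tendsto (fun i ↦ (f i)⁻¹ * C) F (Bornology.cobounded 𝕜) :=
    (tendsto_mul_right_cobounded hC).comp (tendsto_inv₀_nhdsNE_zero.comp hf)
  refine hinv.congr' ?_
  filter_upwards [hfg, hf.eventually_mem self_mem_nhdsWithin] with i hi hfi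
  exact ((eq_inv_mul_iff_mul_eq₀ hfi).2 hi).symm

theorem tendsto_mul_rpow_add_mul_abs_pow_atTop {α : Type*} {F : Filter α} {a b p : ℝ} {n : ℕ}
    {f g : α → ℝ} (ha : 0 < a) (hb : 0 < b) (hp : 0 < p) (hn : n ≠ 0) (hf : ∀ᶠ i in F, 0 ≤ f i)
    (hfg : Tendsto (fun i ↦ f i * g i) F (Bornology.cobounded ℝ)) :
    Tendsto (fun i ↦ a * f i ^ p + b * |g i| ^ n) F atTop := by
  have hrpow : Tendsto (fun x : ℝ ↦ a * x ^ p) atTop atTop :=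
    (tendsto_rpow_atTop hp).const_mul_atTop ha
  have hpow : Tendsto (fun y : ℝ ↦ b * y ^ n) atTop atTop :=
    (tendsto_pow_atTop hn).const_mul_atTop hb
  have hfg_abs : Tendsto (fun i ↦ f i * |g i|) F atTop :=
    (tendsto_norm_cobounded_atTop.comp hfg).congr' <| hf.mono fun i hi ↦ by
      rw [Function.comp_apply, Real.norm_eq_abs, abs_mul, abs_of_nonneg hi]
  exact tendsto_comp_add_comp_atTop_of_tendsto_mul_atTop (f := f) (g := fun i ↦ |g i|)
    hrpow hpow (fun x hx ↦ by positivity) (fun y hy ↦ by positivity)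
    hf (.of_forall fun i ↦ abs_nonneg (g i)) hfg_abs

/-- Corollary to Theorem 2: if the steady physical flow with nonzero mass flow rate only
exists on a bounded domain `0 < r < R`, the external potential still diverges to `-∞`
as `r → 0⁺`. -/
theorem external_potential_diverges_bounded_domain (γ K C₁ l C₂ R : ℝ) (hγ : 1 < γ)
    (hK : 0 < K) (hC₁ : C₁ ≠ 0) (hR : 0 < R) (V ρ v c : ℝ → ℝ)
    (hρ : ∀ r ∈ Set.Ioo (0 : ℝ) R, 0 < ρ r)
    (hc : ∀ r ∈ Set.Ioo (0 : ℝ) R, (c r) ^ 2 = K * γ * ρ r ^ (γ - 1))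
    (hmass : ∀ r ∈ Set.Ioo (0 : ℝ) R, r * ρ r * v r = C₁)
    (hbern : ∀ r ∈ Set.Ioo (0 : ℝ) R,
      (1 / 2) * (v r) ^ 2 + l ^ 2 / (2 * r ^ 2) + (c r) ^ 2 / (γ - 1) + V r = C₂) :
    Tendsto V (nhdsWithin 0 (Set.Ioi 0)) atBot := by
  have hγ' : 0 < γ - 1 := sub_pos.2 hγ
  have hdom : ∀ᶠ r in 𝓝[>] (0 : ℝ), r ∈ Set.Ioo 0 R := Ioo_mem_nhdsGT hR
  have hflux : Tendsto (fun r ↦ ρ r * v r) (𝓝[>] 0) (Bornology.cobounded ℝ) :=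
    tendsto_cobounded_of_mul_eq_const hC₁ (tendsto_id'.2 (nhdsGT_le_nhdsNE 0))
      (hdom.mono fun r hr ↦ (mul_assoc _ _ _).symm.trans (hmass r hr))
  have henergy : Tendsto (fun r ↦ K * γ / (γ - 1) * ρ r ^ (γ - 1) + 1 / 2 * |v r| ^ 2)
      (𝓝[>] 0) atTop :=
    tendsto_mul_rpow_add_mul_abs_pow_atTop (by positivity) one_half_pos hγ' two_ne_zero
      (hdom.mono fun r hr ↦ (hρ r hr).le) hflux
  refine tendsto_atBot_mono' _ ?_
    (tendsto_atBot_add_const_left _ C₂ (tendsto_neg_atTop_atBot.comp henergy))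
  filter_upwards [hdom] with r hr
  have hcentrifugal : 0 ≤ l ^ 2 / (2 * r ^ 2) := by positivity
  have henthalpy : c r ^ 2 / (γ - 1) = K * γ / (γ - 1) * ρ r ^ (γ - 1) := by
    rw [hc r hr, mul_div_right_comm]
  simp only [Function.comp_apply, sq_abs]
  linarith [hbern r hr]
end

section
/- Let γ > 1, V₀ > 0, α > 0, C₂ > 0, and suppose α(γ+1) > 2(γ−1). Consider the external potential V(r) = −V₀/r^α and angular momentum l = 0. Then there is a unique r_H > 0 satisfying the horizon equation V′(r_H) r_H³ − (2(γ−1)/(γ+1)) (C₂ − V(r_H)) r_H² = 0, namely r_H = ( ((γ+1)α − 2(γ−1)) V₀ / (2(γ−1) C₂) )^{1/α}. In particular, for α = 1 and 1 < γ < 3, r_H = (3−γ) V₀ / (2(γ−1) C₂). -/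
/-!
For `r ≠ 0` the horizon equation at `l = 0` reads `r V'(r) = k (C₂ - V(r))` with
`k = 2(γ-1)/(γ+1)`. A power-law potential is homogeneous of degree `-α`, so Euler's identity
`r V'(r) = -α V(r)` removes the derivative, and what remains is linear in `V(r)` and hence
determines `r^α`.
-/

/-- The left-hand side of the horizon equation (rhpol) at angular momentum `l = 0`, for a flow with
adiabatic index `γ` and Bernoulli constant `C₂` in the external potential `V`. Its positive zeros
are the horizon radii. -/
noncomputable def radialHorizonFun (γ C₂ : ℝ) (V : ℝ → ℝ) (r : ℝ) : ℝ :=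
  deriv V r * r ^ 3 - (2 * (γ - 1) / (γ + 1)) * (C₂ - V r) * r ^ 2

/-- The power-law external potential `V(r) = -V₀/r^α`, a function on all of `ℝ` that stands for
the potential only at radii `0 < r`. -/
noncomputable def powerLawPotential (V₀ α r : ℝ) : ℝ :=
  -V₀ / r ^ α

theorem radialHorizonFun_eq_zero_iff {γ C₂ r : ℝ} {V : ℝ → ℝ} (hr : r ≠ 0) :
    radialHorizonFun γ C₂ V r = 0 ↔ r * deriv V r = 2 * (γ - 1) / (γ + 1) * (C₂ - V r) := by
  have factor : radialHorizonFun γ C₂ V r =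
      r ^ 2 * (r * deriv V r - 2 * (γ - 1) / (γ + 1) * (C₂ - V r)) := by
    unfold radialHorizonFun
    ring
  rw [factor, mul_eq_zero_iff_left (pow_ne_zero 2 hr), sub_eq_zero]

theorem hasDerivAt_powerLawPotential (V₀ α : ℝ) {r : ℝ} (hr : 0 < r) :
    HasDerivAt (powerLawPotential V₀ α) (-α * powerLawPotential V₀ α r / r) r := by
  have hpow : r ^ α ≠ 0 := (Real.rpow_pos_of_pos hr α).ne'
  have hderiv : HasDerivAt (powerLawPotential V₀ α) _ r :=
    (hasDerivAt_const r (-V₀)).fun_div (Real.hasDerivAt_rpow_const (p := α) (.inl hr.ne')) hpow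
  convert hderiv using 1
  rw [powerLawPotential, Real.rpow_sub_one hr.ne']
  field_simp
  ring

theorem mul_deriv_powerLawPotential (V₀ α : ℝ) {r : ℝ} (hr : 0 < r) :
    r * deriv (powerLawPotential V₀ α) r = -α * powerLawPotential V₀ α r := by
  rw [(hasDerivAt_powerLawPotential V₀ α hr).deriv, mul_div_cancel₀ _ hr.ne']

theorem radialHorizonFun_powerLawPotential_eq_zero_iff {γ V₀ α C₂ r : ℝ} (hγ : γ ≠ -1)
    (hC₂ : 2 * (γ - 1) * C₂ ≠ 0) (hr : 0 < r) :
    radialHorizonFun γ C₂ (powerLawPotential V₀ α) r = 0 ↔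
      r ^ α = ((γ + 1) * α - 2 * (γ - 1)) * V₀ / (2 * (γ - 1) * C₂) := by
  have hpow : r ^ α ≠ 0 := (Real.rpow_pos_of_pos hr α).ne'
  have hγ' : γ + 1 ≠ 0 := mt eq_neg_of_add_eq_zero_left hγ
  rw [radialHorizonFun_eq_zero_iff hr.ne', mul_deriv_powerLawPotential V₀ α hr,
    powerLawPotential, eq_div_iff hC₂]
  field_simp
  constructor <;> intro h <;> linarith

theorem horizon_radius_power_law_potential_general {γ V₀ α C₂ : ℝ} (hγ : γ ≠ -1) (hα : α ≠ 0)
    (hpos : 0 < ((γ + 1) * α - 2 * (γ - 1)) * V₀ / (2 * (γ - 1) * C₂)) :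
    (∀ r_H : ℝ,
      (0 < r_H ∧ radialHorizonFun γ C₂ (powerLawPotential V₀ α) r_H = 0)
      ↔ r_H = (((γ + 1) * α - 2 * (γ - 1)) * V₀ / (2 * (γ - 1) * C₂)) ^ (1 / α)) ∧
    (α = 1 →
      (((γ + 1) * α - 2 * (γ - 1)) * V₀ / (2 * (γ - 1) * C₂)) ^ (1 / α)
        = (3 - γ) * V₀ / (2 * (γ - 1) * C₂)) := by
  have hC₂ : 2 * (γ - 1) * C₂ ≠ 0 := (div_ne_zero_iff.mp hpos.ne').2
  refine ⟨fun r => ?_, ?_⟩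
  · rw [one_div]
    constructor
    · rintro ⟨hr, hzero⟩
      exact (Real.eq_rpow_inv hr.le hpos.le hα).mpr
        ((radialHorizonFun_powerLawPotential_eq_zero_iff hγ hC₂ hr).mp hzero)
    · rintro rfl
      have hr := Real.rpow_pos_of_pos hpos α⁻¹
      exact ⟨hr, (radialHorizonFun_powerLawPotential_eq_zero_iff hγ hC₂ hr).mpr
        (Real.rpow_inv_rpow hpos.le hα)⟩
  · rintro rfl
    rw [div_one, Real.rpow_one]
    ring

/-- Eq. (rhal) of the Supplemental Material: for the power-law potential
`V(r) = -V₀/r^α` and `l = 0`, the horizon equation has the unique positive solution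
`r_H = (((γ+1)α - 2(γ-1)) V₀ / (2(γ-1) C₂))^{1/α}`; for `α = 1` and `1 < γ < 3`
this is `(3-γ)V₀/(2(γ-1)C₂)`. -/
theorem horizon_radius_power_law_potential (γ V₀ α C₂ : ℝ) (hγ : 1 < γ) (hV₀ : 0 < V₀)
    (hα : 0 < α) (hC₂ : 0 < C₂) (hαγ : 2 * (γ - 1) < α * (γ + 1)) :
    (∀ r_H : ℝ,
      (0 < r_H ∧
        deriv (fun r : ℝ => -V₀ / r ^ α) r_H * r_H ^ 3
          - (2 * (γ - 1) / (γ + 1)) * (C₂ - (-V₀ / r_H ^ α)) * r_H ^ 2 = 0)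
      ↔ r_H = (((γ + 1) * α - 2 * (γ - 1)) * V₀ / (2 * (γ - 1) * C₂)) ^ (1 / α)) ∧
    (α = 1 → γ < 3 →
      (((γ + 1) * α - 2 * (γ - 1)) * V₀ / (2 * (γ - 1) * C₂)) ^ (1 / α)
        = (3 - γ) * V₀ / (2 * (γ - 1) * C₂)) := by
  have hpos : 0 < ((γ + 1) * α - 2 * (γ - 1)) * V₀ / (2 * (γ - 1) * C₂) :=
    div_pos (mul_pos (by linarith) hV₀) (mul_pos (by linarith) hC₂)
  have general := horizon_radius_power_law_potential_general (by linarith) hα.ne' hpos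
  exact ⟨general.1, fun hα_one _ => general.2 hα_one⟩
end

section
/- Let γ > 1, V₀ > 0, α > 0 and r_H > 0. Consider V(r) = −V₀/r^α (so V′(r) = αV₀ r^{−α−1} and V″(r) = −α(α+1)V₀ r^{−α−2}), angular momentum l = 0, and horizon sound speed c_H² = r_H V′(r_H) = αV₀/r_H^α. Define Δ = (4/(γ+1)) ( −V″(r_H) + (V′(r_H)/r_H)·(1−3γ)/(γ+1) ) and C = (1/(γ+1)) ( γ c_H²/r_H² + V″(r_H) ). Then Δ > 0 if and only if α > 2(γ−1)/(γ+1), and C < 0 if and only if α > γ − 1. -/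
/-!
A power-law potential satisfies `V'' = -(α + 1) V' / r`. Substituting this makes both `Δ` and `C`
multiples of the single quantity `V' / r`, which is positive for an attractive force, so each sign
is decided by a factor that is affine in `α`.
-/

/-- The discriminant `Δ = B² - 4C` of the sonic-point quadratic at zero angular momentum and with
horizon sound speed `c² = r V'`, in terms of the values `V'` and `V''` at the sonic point `r` of
the derivatives of the potential. -/
def sonicDiscriminant {K : Type*} [Field K] (γ r V' V'' : K) : K :=
  4 / (γ + 1) * (-V'' + V' / r * (1 - 3 * γ) / (γ + 1))

/-- The constant coefficient `C` of the sonic-point quadratic at zero angular momentum, in terms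
of the squared sound speed `cSq` and the value `V''` at the sonic point `r` of the second
derivative of the potential. -/
def sonicConstantCoeff {K : Type*} [Field K] (γ r cSq V'' : K) : K :=
  1 / (γ + 1) * (γ * cSq / r ^ 2 + V'')

section Field

variable {K : Type*} [Field K] {γ α r V' V'' : K}

theorem sonicDiscriminant_eq_mul (hγ : γ + 1 ≠ 0) (hV : V'' = -(α + 1) * (V' / r)) :
    sonicDiscriminant γ r V' V'' =
      4 / (γ + 1) * (V' / r) * (α - 2 * (γ - 1) / (γ + 1)) := by
  have exponent_shift : α + 1 + (1 - 3 * γ) / (γ + 1) = α - 2 * (γ - 1) / (γ + 1) := by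
    field_simp
    ring
  rw [sonicDiscriminant, hV, ← exponent_shift]
  ring

theorem sonicConstantCoeff_eq_mul (hr : r ≠ 0) (hV : V'' = -(α + 1) * (V' / r)) :
    sonicConstantCoeff γ r (r * V') V'' = 1 / (γ + 1) * (V' / r) * (γ - 1 - α) := by
  have sound_speed_term : γ * (r * V') / r ^ 2 = γ * (V' / r) := by
    field_simp
  rw [sonicConstantCoeff, hV, sound_speed_term]
  ring

variable [LinearOrder K] [IsStrictOrderedRing K]

theorem sonicDiscriminant_pos_iff (hγ : 0 < γ + 1) (hforce : 0 < V' / r)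
    (hV : V'' = -(α + 1) * (V' / r)) :
    0 < sonicDiscriminant γ r V' V'' ↔ 2 * (γ - 1) / (γ + 1) < α := by
  have hscale : 0 < 4 / (γ + 1) * (V' / r) := by positivity
  rw [sonicDiscriminant_eq_mul hγ.ne' hV, mul_pos_iff_of_pos_left hscale, sub_pos]

theorem sonicConstantCoeff_neg_iff (hγ : 0 < γ + 1) (hforce : 0 < V' / r)
    (hV : V'' = -(α + 1) * (V' / r)) :
    sonicConstantCoeff γ r (r * V') V'' < 0 ↔ γ - 1 < α := by
  have hr : r ≠ 0 := (div_ne_zero_iff.mp hforce.ne').2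
  have hscale : 0 < 1 / (γ + 1) * (V' / r) := by positivity
  rw [sonicConstantCoeff_eq_mul hr hV, ← smul_eq_mul, smul_neg_iff_of_pos_left hscale, sub_neg]

end Field

theorem powerLaw_secondDeriv_eq {r : ℝ} (hr : 0 < r) (V₀ α : ℝ) :
    -α * (α + 1) * V₀ * r ^ (-α - 2) = -(α + 1) * (α * V₀ * r ^ (-α - 1) / r) := by
  have rpow_div : r ^ (-α - 2) = r ^ (-α - 1) / r := by
    rw [← Real.rpow_sub_one hr.ne']
    congr 1
    ring
  rw [rpow_div]
  ring

/-- The condition `0 < α * V₀` says that the force is attractive; it also covers the confining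
potentials `k * r ^ n` with `k, n > 0`. -/
theorem sonic_point_classification_power_law_general {γ V₀ α r : ℝ} (hγ : -1 < γ)
    (hαV₀ : 0 < α * V₀) (hr : 0 < r) :
    (0 < sonicDiscriminant γ r (α * V₀ * r ^ (-α - 1)) (-α * (α + 1) * V₀ * r ^ (-α - 2))
      ↔ 2 * (γ - 1) / (γ + 1) < α) ∧
    (sonicConstantCoeff γ r (r * (α * V₀ * r ^ (-α - 1))) (-α * (α + 1) * V₀ * r ^ (-α - 2)) < 0
      ↔ γ - 1 < α) := by
  have hγ' : 0 < γ + 1 := neg_lt_iff_pos_add.mp hγ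
  have hforce : 0 < α * V₀ * r ^ (-α - 1) / r := by positivity
  have hV := powerLaw_secondDeriv_eq hr V₀ α
  exact ⟨sonicDiscriminant_pos_iff hγ' hforce hV, sonicConstantCoeff_neg_iff hγ' hforce hV⟩

/-- Eqs. (alga) and (CC) of the Supplemental Material: sign criteria for the
discriminant `Δ` and the coefficient `C` of the sonic-point quadratic, for the
power-law potential `V(r) = -V₀/r^α` with `l = 0` and `c_H² = r_H V'(r_H)`. -/
theorem sonic_point_classification_power_law (γ V₀ α r_H : ℝ) (hγ : 1 < γ)
    (hV₀ : 0 < V₀) (hα : 0 < α) (hrH : 0 < r_H) :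
    (0 < (4 / (γ + 1)) *
        (-(-α * (α + 1) * V₀ * r_H ^ (-α - 2))
          + ((α * V₀ * r_H ^ (-α - 1)) / r_H) * (1 - 3 * γ) / (γ + 1))
      ↔ 2 * (γ - 1) / (γ + 1) < α) ∧
    ((1 / (γ + 1)) *
        (γ * (r_H * (α * V₀ * r_H ^ (-α - 1))) / r_H ^ 2
          + (-α * (α + 1) * V₀ * r_H ^ (-α - 2))) < 0
      ↔ γ - 1 < α) :=
  sonic_point_classification_power_law_general (by linarith) (mul_pos hα hV₀) hrH
end

section
/- Let C₂ ∈ ℝ and r₀ > 0, and let c, v : (0, r₀) → ℝ satisfy, for all r ∈ (0, r₀): c(r) > 0, v(r) > c(r), c(r)² v(r) r = 1, and (1/2) v(r)² + c(r)² − 1/r = C₂. Then v(r)·√r → √2 and c(r)·r^{1/4} → 2^{−1/4} as r → 0⁺. -/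
open Filter

/-!
For polytropic index `γ`, `c ^ 2 ∝ ρ ^ (γ - 1)` and the specific enthalpy is `c ^ 2 / (γ - 1)`; with
`p = 2 / (γ - 1)` the mass flux relation reads `c ^ p * v * r = C₁`. If the Mach number is bounded
below, this relation alone gives `c ^ (p + 1) = O(c ^ p * v) = O(r⁻¹)`, so `c * √r → 0` as soon as
`1 < p`, that is `γ < 3`. The enthalpy then drops out of Bernoulli's relation multiplied by `r`,
leaving `(v * √r) ^ 2 → 2 * V₀`, and the mass flux relation in the form
`(c * r ^ (1 / (2 * p))) ^ p * (v * √r) = C₁` turns this into the asymptotics of `c`.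
-/

open Asymptotics Topology

section Flow

variable {c v : ℝ → ℝ} {p C₁ V₀ : ℝ}

theorem isBigO_rpow_of_massFlux {l : Filter ℝ} (hp : 0 ≤ p) (hl : ∀ᶠ r in l, 0 < r)
    (hc : ∀ᶠ r in l, 0 ≤ c r) (hcv : c =O[l] v)
    (hmass : ∀ᶠ r in l, c r ^ p * v r * r = C₁) :
    c =O[l] fun r ↦ r ^ (-(p + 1)⁻¹) := by
  have hpow : (fun r ↦ c r ^ (p + 1)) =O[l] fun r ↦ r⁻¹ := by
    have hflux : (fun r ↦ c r ^ p * v r) =ᶠ[l] fun r ↦ C₁ * r⁻¹ := by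
      filter_upwards [hmass, hl] with r hm hr
      rw [← hm, mul_inv_cancel_right₀ hr.ne']
    have hsplit : (fun r ↦ c r ^ (p + 1)) =ᶠ[l] fun r ↦ c r ^ p * c r := by
      filter_upwards [hc] with r hr
      rw [Real.rpow_add_of_nonneg hr hp zero_le_one, Real.rpow_one]
    calc (fun r ↦ c r ^ (p + 1)) =ᶠ[l] fun r ↦ c r ^ p * c r := hsplit
      _ =O[l] fun r ↦ c r ^ p * v r := (isBigO_refl _ _).mul hcv
      _ =ᶠ[l] fun r ↦ C₁ * r⁻¹ := hflux
      _ =O[l] fun r ↦ r⁻¹ := isBigO_const_mul_self _ _ _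
  have hinv_nonneg : ∀ᶠ r : ℝ in l, 0 ≤ r⁻¹ := by
    filter_upwards [hl] with r hr using inv_nonneg.2 hr.le
  refine (hpow.rpow (r := (p + 1)⁻¹) (by positivity) hinv_nonneg).congr' ?_ ?_
  · filter_upwards [hc] with r hr
    exact Real.rpow_rpow_inv hr (by positivity)
  · filter_upwards [hl] with r hr
    rw [Real.rpow_neg hr.le, Real.inv_rpow hr.le]

theorem tendsto_mul_sqrt_zero_of_massFlux (hp : 1 < p) (hc : ∀ᶠ r in 𝓝[>] 0, 0 ≤ c r)
    (hcv : c =O[𝓝[>] 0] v) (hmass : ∀ᶠ r in 𝓝[>] 0, c r ^ p * v r * r = C₁) :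
    Tendsto (fun r ↦ c r * √r) (𝓝[>] 0) (𝓝 0) := by
  have hexp : 0 < -(p + 1)⁻¹ + 1 / 2 := by
    have : (p + 1)⁻¹ < 2⁻¹ := inv_strictAnti₀ two_pos (by linarith)
    linarith
  have hpow : Tendsto (fun r : ℝ ↦ r ^ (-(p + 1)⁻¹ + 1 / 2)) (𝓝[>] 0) (𝓝 0) := by
    have h := (Real.continuousAt_rpow_const 0 _ (.inr hexp.le)).tendsto
    rw [Real.zero_rpow hexp.ne'] at h
    exact h.mono_left nhdsWithin_le_nhds
  have hbound := (isBigO_rpow_of_massFlux (by linarith) self_mem_nhdsWithin hc hcv hmass).mul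
    (isBigO_refl (fun r ↦ √r) (𝓝[>] 0))
  refine (hbound.congr' .rfl ?_).trans_tendsto hpow
  filter_upwards [self_mem_nhdsWithin] with r hr
  rw [Real.sqrt_eq_rpow, Real.rpow_add hr]

theorem tendsto_energy_mul_of_bernoulli {e : ℝ → ℝ} {C₂ : ℝ}
    (hbern : ∀ᶠ r in 𝓝[>] 0, e r - V₀ / r = C₂) :
    Tendsto (fun r ↦ e r * r) (𝓝[>] 0) (𝓝 V₀) := by
  have hlin : Tendsto (fun r ↦ V₀ + C₂ * r) (𝓝[>] 0) (𝓝 V₀) :=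
    tendsto_nhdsWithin_of_tendsto_nhds (Continuous.tendsto' (by fun_prop) _ _ (by simp))
  refine hlin.congr' ?_
  filter_upwards [hbern, self_mem_nhdsWithin] with r hb hr
  rw [← hb, sub_mul, div_mul_cancel₀ V₀ (ne_of_gt hr), add_sub_cancel]

theorem tendsto_mul_sqrt_of_energy {l : Filter ℝ} {a : ℝ} (hl : ∀ᶠ r in l, 0 ≤ r)
    (hv : ∀ᶠ r in l, 0 ≤ v r)
    (henergy : Tendsto (fun r ↦ (1 / 2 * v r ^ 2 + a * c r ^ 2) * r) l (𝓝 V₀))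
    (hc : Tendsto (fun r ↦ c r * √r) l (𝓝 0)) :
    Tendsto (fun r ↦ v r * √r) l (𝓝 √(2 * V₀)) := by
  have hsq : Tendsto
      (fun r ↦ 2 * ((1 / 2 * v r ^ 2 + a * c r ^ 2) * r - a * (c r * √r) ^ 2)) l (𝓝 (2 * V₀)) := by
    simpa using (henergy.sub ((hc.pow 2).const_mul a)).const_mul 2
  refine hsq.sqrt.congr' ?_
  filter_upwards [hl, hv] with r hr hvr
  have : 2 * ((1 / 2 * v r ^ 2 + a * c r ^ 2) * r - a * (c r * √r) ^ 2) = (v r * √r) ^ 2 := by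
    rw [mul_pow, mul_pow, Real.sq_sqrt hr]
    ring
  rw [this, Real.sqrt_sq (by positivity)]

theorem tendsto_mul_rpow_of_massFlux {l : Filter ℝ} {w : ℝ} (hp : 0 < p) (hw : w ≠ 0)
    (hl : ∀ᶠ r in l, 0 ≤ r) (hc : ∀ᶠ r in l, 0 ≤ c r)
    (hmass : ∀ᶠ r in l, c r ^ p * v r * r = C₁)
    (hv : Tendsto (fun r ↦ v r * √r) l (𝓝 w)) :
    Tendsto (fun r ↦ c r * r ^ (p⁻¹ / 2)) l (𝓝 ((C₁ / w) ^ p⁻¹)) := by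
  have hquot : Tendsto (fun r ↦ C₁ / (v r * √r)) l (𝓝 (C₁ / w)) := tendsto_const_nhds.div hv hw
  refine (hquot.rpow_const (.inr (inv_nonneg.2 hp.le))).congr' ?_
  filter_upwards [hl, hc, hmass, hv.eventually_ne hw] with r hr hcr hm hvr
  have hflux : C₁ / (v r * √r) = c r ^ p * √r := by
    rw [div_eq_iff hvr, ← hm]
    linear_combination (-(c r ^ p * v r)) * Real.mul_self_sqrt hr
  rw [hflux, Real.mul_rpow (by positivity) (by positivity), Real.rpow_rpow_inv hcr hp.ne',
    Real.rpow_div_two_eq_sqrt _ hr]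

end Flow

theorem div_sqrt_rpow {x y : ℝ} (hx : 0 ≤ x) (hy : 0 ≤ y) (t : ℝ) :
    (x / √y) ^ t = (x ^ 2 / y) ^ (t / 2) := by
  rw [Real.rpow_div_two_eq_sqrt _ (by positivity), Real.sqrt_div (sq_nonneg x), Real.sqrt_sq hx]

theorem bec_near_singularity_asymptotics_general {γ C₁ C₂ V₀ : ℝ} {c v : ℝ → ℝ} (hγ₁ : 1 < γ)
    (hγ₃ : γ < 3) (hC₁ : 0 < C₁) (hV₀ : 0 < V₀) (hc : ∀ᶠ r in 𝓝[>] 0, 0 ≤ c r)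
    (hcv : c =O[𝓝[>] 0] v)
    (hmass : ∀ᶠ r in 𝓝[>] 0, c r ^ (2 / (γ - 1)) * v r * r = C₁)
    (hbern : ∀ᶠ r in 𝓝[>] 0, 1 / 2 * v r ^ 2 + c r ^ 2 / (γ - 1) - V₀ / r = C₂) :
    Tendsto (fun r ↦ v r * √r) (𝓝[>] 0) (𝓝 √(2 * V₀)) ∧
      Tendsto (fun r ↦ c r * r ^ ((γ - 1) / 4)) (𝓝[>] 0)
        (𝓝 ((C₁ ^ 2 / (2 * V₀)) ^ ((γ - 1) / 4))) := by
  have hγ : 0 < γ - 1 := sub_pos.2 hγ₁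
  have hnonneg : ∀ᶠ r : ℝ in 𝓝[>] 0, 0 ≤ r :=
    eventually_nhdsWithin_of_forall fun _ hr ↦ le_of_lt hr
  have hv : ∀ᶠ r in 𝓝[>] 0, 0 ≤ v r := by
    filter_upwards [hnonneg, hc, hmass] with r hr hcr hm
    rw [← hm] at hC₁
    exact (pos_of_mul_pos_right (pos_of_mul_pos_left hC₁ hr) (by positivity)).le
  have hcr := tendsto_mul_sqrt_zero_of_massFlux ((one_lt_div hγ).2 (by linarith)) hc hcv hmass
  have henergy : Tendsto (fun r ↦ (1 / 2 * v r ^ 2 + (γ - 1)⁻¹ * c r ^ 2) * r) (𝓝[>] 0)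
      (𝓝 V₀) := by
    simpa only [div_eq_inv_mul] using tendsto_energy_mul_of_bernoulli hbern
  have hvr := tendsto_mul_sqrt_of_energy hnonneg hv henergy hcr
  have hexp : (2 / (γ - 1))⁻¹ / 2 = (γ - 1) / 4 := by rw [inv_div, div_div]; norm_num
  have hcr' := tendsto_mul_rpow_of_massFlux (by positivity) (by positivity) hnonneg hc hmass hvr
  rw [div_sqrt_rpow hC₁.le (by positivity), hexp] at hcr'
  exact ⟨hvr, hcr'⟩

/-- Near-singularity asymptotics of the transonic BEC flow (γ = 2, units with
C₁' = V₀ = 1): `v(r)√r → √2` and `c(r) r^{1/4} → 2^{-1/4}` as `r → 0⁺`. -/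
theorem bec_near_singularity_asymptotics (C₂ r₀ : ℝ) (hr₀ : 0 < r₀)
    (c v : ℝ → ℝ)
    (hc : ∀ r ∈ Set.Ioo (0 : ℝ) r₀, 0 < c r)
    (hsupersonic : ∀ r ∈ Set.Ioo (0 : ℝ) r₀, c r < v r)
    (hmass : ∀ r ∈ Set.Ioo (0 : ℝ) r₀, (c r) ^ 2 * v r * r = 1)
    (hbern : ∀ r ∈ Set.Ioo (0 : ℝ) r₀, (1 / 2) * (v r) ^ 2 + (c r) ^ 2 - 1 / r = C₂) :
    Tendsto (fun r => v r * Real.sqrt r) (nhdsWithin 0 (Set.Ioi 0))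
      (nhds (Real.sqrt 2)) ∧
    Tendsto (fun r => c r * r ^ ((1 : ℝ) / 4)) (nhdsWithin 0 (Set.Ioi 0))
      (nhds ((2 : ℝ) ^ (-(1 : ℝ) / 4))) := by
  have near_zero {P : ℝ → Prop} (h : ∀ r ∈ Set.Ioo 0 r₀, P r) : ∀ᶠ r in 𝓝[>] 0, P r :=
    mem_of_superset (Ioo_mem_nhdsGT hr₀) h
  have hcv : c =O[𝓝[>] 0] v := .of_bound' <| near_zero fun r hr ↦
    abs_le_abs_of_nonneg (hc r hr).le (hsupersonic r hr).le
  have h := bec_near_singularity_asymptotics_general (γ := 2) (C₁ := 1) (C₂ := C₂) (V₀ := 1)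
    one_lt_two (by norm_num) one_pos one_pos (near_zero fun r hr ↦ (hc r hr).le) hcv
    (near_zero fun r hr ↦ by norm_num [hmass r hr])
    (near_zero fun r hr ↦ by norm_num [← hbern r hr])
  refine ⟨by simpa using h.1, ?_⟩
  convert h.2 using 2 <;> norm_num [neg_div, Real.rpow_neg, Real.div_rpow]
end

section
/- Let C₂ ∈ ℝ and r₀ > 0, and let c, v : (0, r₀) → ℝ satisfy, for all r ∈ (0, r₀): c(r) > 0, v(r) > c(r), c(r)² v(r) r = 1, and (1/2) v(r)² + c(r)² − 1/r = C₂. Then the Mach number M(r) = v(r)/c(r) satisfies M(r) = 1/(c(r)³ r) for all r ∈ (0, r₀), and M(r) → +∞ as r → 0⁺. -/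
/-!
Mass conservation `c² v r = C₁` turns the Mach number into `(v / c)⁴ C₁² = r² (v²)³`. In a
supersonic flow Bernoulli's relation gives `C₂ - V ≤ (3 / 2) v²`, so once `V ≤ -2 |C₂|` we have
`-V ≤ 3 v²` and `(v / c)⁴` dominates `r² (-V)³ / (27 C₁²)`. For `V = -1 / r` this is of order
`1 / r`.
-/

open Filter

open scoped Topology

theorem tendsto_atTop_of_pow {α R : Type*} [Semiring R] [LinearOrder R] [IsStrictOrderedRing R]
    {l : Filter α} {f : α → R} {n : ℕ} (hf : ∀ᶠ x in l, 0 ≤ f x)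
    (hpow : Tendsto (fun x => f x ^ n) l atTop) :
    Tendsto f l atTop := by
  refine tendsto_atTop.2 fun b => ?_
  filter_upwards [hf, hpow.eventually_gt_atTop (max b 0 ^ n)] with x hx hlt
  exact (le_max_left b 0).trans (lt_of_pow_lt_pow_left₀ n hx hlt).le

section NhdsGTZero

variable {𝕜 : Type*} [Field 𝕜] [LinearOrder 𝕜] [IsStrictOrderedRing 𝕜] [TopologicalSpace 𝕜]
  [OrderTopology 𝕜] {k n : ℕ}

theorem tendsto_atTop_of_pow_mul_odd_pow {f : 𝕜 → 𝕜} (hn : Odd n)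
    (hf : Tendsto (fun r => r ^ k * f r ^ n) (𝓝[>] 0) atTop) :
    Tendsto f (𝓝[>] 0) atTop := by
  have hpos : ∀ᶠ r in 𝓝[>] 0, 0 < f r ^ n := by
    filter_upwards [hf.eventually_gt_atTop 0, self_mem_nhdsWithin] with r hfr (hr : 0 < r)
    exact pos_of_mul_pos_right hfr (pow_pos hr k).le
  refine tendsto_atTop_of_pow (n := n) (hpos.mono fun r hfr => (hn.pow_pos_iff.1 hfr).le)
    (tendsto_atTop_mono' _ ?_ hf)
  filter_upwards [hpos, Ioo_mem_nhdsGT (zero_lt_one' 𝕜)] with r hfr hr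
  exact mul_le_of_le_one_left hfr.le (pow_le_one₀ hr.1.le hr.2.le)

theorem tendsto_pow_mul_inv_pow_atTop (hkn : k < n) :
    Tendsto (fun r : 𝕜 => r ^ k * r⁻¹ ^ n) (𝓝[>] 0) atTop := by
  obtain ⟨d, rfl⟩ := Nat.exists_eq_add_of_lt hkn
  refine ((tendsto_pow_atTop d.succ_ne_zero).comp tendsto_inv_nhdsGT_zero).congr' ?_
  filter_upwards [self_mem_nhdsWithin] with r (hr : 0 < r)
  calc r⁻¹ ^ (d + 1) = (r * r⁻¹) ^ k * r⁻¹ ^ (d + 1) := by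
        rw [mul_inv_cancel₀ hr.ne', one_pow, one_mul]
    _ = r ^ k * r⁻¹ ^ (k + d + 1) := by ring

end NhdsGTZero

section Pointwise

variable {𝕜 : Type*} [Field 𝕜] {c v r C₁ C₂ V : 𝕜}

theorem mach_number_eq_of_mass_flux (hc : c ≠ 0) (hr : r ≠ 0) (hmass : c ^ 2 * v * r = C₁) :
    v / c = C₁ / (c ^ 3 * r) := by
  rw [← hmass]
  field_simp

theorem mach_number_pow_four_mul_sq (hc : c ≠ 0) (hmass : c ^ 2 * v * r = C₁) :
    (v / c) ^ 4 * C₁ ^ 2 = r ^ 2 * (v ^ 2) ^ 3 := by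
  rw [← hmass]
  field_simp

variable [LinearOrder 𝕜] [IsStrictOrderedRing 𝕜]

theorem neg_potential_le_three_mul_sq (hc : 0 ≤ c) (hcv : c ≤ v)
    (hbern : (1 / 2) * v ^ 2 + c ^ 2 + V = C₂) (hV : V ≤ -(2 * |C₂|)) :
    -V ≤ 3 * v ^ 2 := by
  have hsq : c ^ 2 ≤ v ^ 2 := pow_le_pow_left₀ hc hcv 2
  have hC₂ : -|C₂| ≤ C₂ := neg_abs_le C₂
  linarith

theorem sq_mul_neg_potential_cube_le_mach_number_pow_four (hc : 0 < c) (hcv : c ≤ v)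
    (hmass : c ^ 2 * v * r = C₁) (hbern : (1 / 2) * v ^ 2 + c ^ 2 + V = C₂)
    (hV : V ≤ -(2 * |C₂|)) :
    r ^ 2 * (-V) ^ 3 ≤ 27 * C₁ ^ 2 * (v / c) ^ 4 := by
  have hV_nonneg : 0 ≤ -V := by linarith [abs_nonneg C₂]
  have hdepth : -V ≤ 3 * v ^ 2 := neg_potential_le_three_mul_sq hc.le hcv hbern hV
  calc r ^ 2 * (-V) ^ 3 ≤ r ^ 2 * (3 * v ^ 2) ^ 3 := by gcongr
    _ = 27 * (r ^ 2 * (v ^ 2) ^ 3) := by ring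
    _ = 27 * C₁ ^ 2 * (v / c) ^ 4 := by
      rw [← mach_number_pow_four_mul_sq hc.ne' hmass]
      ring

end Pointwise

/-- The growth condition on `V` says that the well is deeper than `r ^ (-2 / 3)` at the origin. -/
theorem bec_mach_number_diverges_general {C₁ C₂ r₀ : ℝ} (hr₀ : 0 < r₀) {V c v : ℝ → ℝ}
    (hV : Tendsto (fun r => r ^ 2 * (-V r) ^ 3) (𝓝[>] 0) atTop)
    (hc : ∀ r ∈ Set.Ioo 0 r₀, 0 < c r)
    (hcv : ∀ r ∈ Set.Ioo 0 r₀, c r ≤ v r)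
    (hmass : ∀ r ∈ Set.Ioo 0 r₀, c r ^ 2 * v r * r = C₁)
    (hbern : ∀ r ∈ Set.Ioo 0 r₀, (1 / 2) * v r ^ 2 + c r ^ 2 + V r = C₂) :
    (∀ r ∈ Set.Ioo 0 r₀, v r / c r = C₁ / (c r ^ 3 * r)) ∧
      Tendsto (fun r => v r / c r) (𝓝[>] 0) atTop := by
  have hIoo : Set.Ioo 0 r₀ ∈ 𝓝[>] (0 : ℝ) := Ioo_mem_nhdsGT hr₀
  have hv : ∀ r ∈ Set.Ioo 0 r₀, 0 < v r := fun r hr => (hc r hr).trans_le (hcv r hr)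
  have hC₁ : 0 < C₁ := by
    obtain ⟨r, hr⟩ := Set.nonempty_Ioo.2 hr₀
    rw [← hmass r hr]
    exact mul_pos (mul_pos (pow_pos (hc r hr) 2) (hv r hr)) hr.1
  have hV_atBot : Tendsto V (𝓝[>] 0) atBot :=
    tendsto_neg_atTop_iff.1 (tendsto_atTop_of_pow_mul_odd_pow (by decide) hV)
  refine ⟨fun r hr => mach_number_eq_of_mass_flux (hc r hr).ne' hr.1.ne' (hmass r hr),
    tendsto_atTop_of_pow (n := 4) ?_ ?_⟩
  · filter_upwards [hIoo] with r hr
    exact (div_pos (hv r hr) (hc r hr)).le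
  · refine (tendsto_const_mul_atTop_of_pos (r := 27 * C₁ ^ 2) (by positivity)).1 ?_
    refine tendsto_atTop_mono' _ ?_ hV
    filter_upwards [hIoo, hV_atBot.eventually_le_atBot (-(2 * |C₂|))] with r hr hVr
    exact sq_mul_neg_potential_cube_le_mach_number_pow_four (hc r hr) (hcv r hr) (hmass r hr)
      (hbern r hr) hVr

/-- In the transonic BEC flow (γ = 2, units with C₁' = V₀ = 1), the Mach number
`M = v/c` satisfies `M = 1/(c³ r)` and diverges as `r → 0⁺`. -/
theorem bec_mach_number_diverges (C₂ r₀ : ℝ) (hr₀ : 0 < r₀)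
    (c v : ℝ → ℝ)
    (hc : ∀ r ∈ Set.Ioo (0 : ℝ) r₀, 0 < c r)
    (hsupersonic : ∀ r ∈ Set.Ioo (0 : ℝ) r₀, c r < v r)
    (hmass : ∀ r ∈ Set.Ioo (0 : ℝ) r₀, (c r) ^ 2 * v r * r = 1)
    (hbern : ∀ r ∈ Set.Ioo (0 : ℝ) r₀, (1 / 2) * (v r) ^ 2 + (c r) ^ 2 - 1 / r = C₂) :
    (∀ r ∈ Set.Ioo (0 : ℝ) r₀, v r / c r = 1 / ((c r) ^ 3 * r)) ∧
    Tendsto (fun r => v r / c r) (nhdsWithin 0 (Set.Ioi 0)) atTop :=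
  bec_mach_number_diverges_general (V := fun r => -(1 / r)) hr₀
    (by simpa only [neg_neg, one_div] using tendsto_pow_mul_inv_pow_atTop (by norm_num : 2 < 3)) hc
    (fun r hr => (hsupersonic r hr).le) hmass hbern
end

section
/- Let C₂ ∈ ℝ, r₀ > 0 and 0 < r_T < r₀, and let c, v : (0, r₀) → ℝ be continuous with, for all r ∈ (0, r₀): c(r) > 0, v(r) > c(r), c(r)² v(r) r = 1, and (1/2) v(r)² + c(r)² − 1/r = C₂. Then the improper integral ∫₀^{r_T} c(r)³ dr converges (is finite). -/
/-!
On the supersonic branch `c ≤ v` Bernoulli's relation forces `v² ≥ (2/3) (C - V)`, and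
conservation of mass `c² v r = k` turns this into an upper bound for `c⁴ = k² / (r v)²`. For a
potential at least as deep as `-V₀ r⁻ᵖ` it gives `c⁴ = O(r ^ (p - 2))`, so that
`c³ = O(r ^ (3 (p - 2) / 4))`, which is integrable at `0` exactly when `p > 2 / 3`; the case
`p = 1` is `c³ = O(r ^ (-3 / 4))`. Without Bernoulli's relation, `c ≤ v` and conservation of mass
give only the borderline `c³ ≤ k / r`, but this is enough to absorb the Bernoulli constant `C`.
-/

open MeasureTheory Set

theorem integrableOn_Ioo_of_norm_le_const_mul_rpow {E : Type*} [NormedAddCommGroup E] {f : ℝ → E}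
    {R K s : ℝ} (hs : -1 < s) (hf : AEStronglyMeasurable f (volume.restrict (Ioo 0 R)))
    (hbound : ∀ r ∈ Ioo 0 R, ‖f r‖ ≤ K * r ^ s) : IntegrableOn f (Ioo 0 R) := by
  rcases le_or_gt R 0 with hR | hR
  · simp [Ioo_eq_empty_of_le hR]
  · have hrpow : IntegrableOn (fun r : ℝ ↦ r ^ s) (Ioo 0 R) :=
      (intervalIntegral.integrableOn_Ioo_rpow_iff hR).2 hs
    exact (hrpow.const_mul K).mono' hf (ae_restrict_of_forall_mem measurableSet_Ioo hbound)

theorem pow_three_le_rpow_mul_rpow_of_pow_four_le {x K r s : ℝ} (hx : 0 ≤ x) (hK : 0 ≤ K)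
    (hr : 0 ≤ r) (h : x ^ 4 ≤ K * r ^ s) :
    x ^ 3 ≤ K ^ (3 / 4 : ℝ) * r ^ (s * (3 / 4)) :=
  calc x ^ 3 = (x ^ 4) ^ (3 / 4 : ℝ) := by
        rw [← Real.rpow_natCast_mul hx, ← Real.rpow_natCast]; norm_num
    _ ≤ (K * r ^ s) ^ (3 / 4 : ℝ) := by gcongr
    _ = K ^ (3 / 4 : ℝ) * r ^ (s * (3 / 4)) := by
        rw [Real.mul_rpow hK (by positivity), ← Real.rpow_mul hr]

section Pointwise

variable {c v r k : ℝ}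

theorem pow_three_mul_le_massFlux (hr : 0 ≤ r) (hcv : c ≤ v) (hmass : c ^ 2 * v * r = k) :
    c ^ 3 * r ≤ k :=
  calc c ^ 3 * r = c ^ 2 * c * r := by ring
    _ ≤ c ^ 2 * v * r := by gcongr
    _ = k := hmass

theorem pow_four_mul_sq_le_of_massFlux {R : ℝ} (hr : 0 ≤ r) (hrR : r ≤ R) (hc : 0 ≤ c)
    (hcv : c ≤ v) (hmass : c ^ 2 * v * r = k) :
    c ^ 4 * r ^ 2 ≤ (k ^ 4 * R ^ 2) ^ (1 / 3 : ℝ) := by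
  have hcube : (c ^ 4 * r ^ 2) ^ 3 ≤ k ^ 4 * R ^ 2 :=
    calc (c ^ 4 * r ^ 2) ^ 3 = (c ^ 3 * r) ^ 4 * r ^ 2 := by ring
      _ ≤ k ^ 4 * R ^ 2 := by
        gcongr
        exact pow_three_mul_le_massFlux hr hcv hmass
  calc c ^ 4 * r ^ 2 = ((c ^ 4 * r ^ 2) ^ 3) ^ (1 / 3 : ℝ) := by
        rw [← Real.rpow_natCast_mul (by positivity)]; norm_num
    _ ≤ (k ^ 4 * R ^ 2) ^ (1 / 3 : ℝ) := by gcongr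

theorem energy_mul_pow_four_mul_sq_le {e : ℝ} (hc : 0 ≤ c) (hcv : c ≤ v)
    (hmass : c ^ 2 * v * r = k) (henergy : e ≤ 1 / 2 * v ^ 2 + c ^ 2) :
    e * (c ^ 4 * r ^ 2) ≤ 3 / 2 * k ^ 2 := by
  have hsq : c ^ 2 ≤ v ^ 2 := by gcongr
  calc e * (c ^ 4 * r ^ 2) ≤ 3 / 2 * v ^ 2 * (c ^ 4 * r ^ 2) := by
        gcongr
        linarith
    _ = 3 / 2 * (c ^ 2 * v * r) ^ 2 := by ring
    _ = 3 / 2 * k ^ 2 := by rw [hmass]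

theorem pow_four_le_const_mul_rpow {V₀ p C R : ℝ} (hV₀ : 0 < V₀) (hr : 0 < r) (hrR : r ≤ R)
    (hc : 0 ≤ c) (hcv : c ≤ v) (hmass : c ^ 2 * v * r = k)
    (hbern : C + V₀ * r ^ (-p) ≤ 1 / 2 * v ^ 2 + c ^ 2) :
    c ^ 4 ≤ (3 / 2 * k ^ 2 + |C| * (k ^ 4 * R ^ 2) ^ (1 / 3 : ℝ)) / V₀ * r ^ (p - 2) := by
  have henergy := energy_mul_pow_four_mul_sq_le hc hcv hmass hbern
  have hconst : -C * (c ^ 4 * r ^ 2) ≤ |C| * (k ^ 4 * R ^ 2) ^ (1 / 3 : ℝ) := by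
    gcongr
    · exact neg_le_abs C
    · exact pow_four_mul_sq_le_of_massFlux hr.le hrR hc hcv hmass
  have hrpow : r ^ (-p) * r ^ 2 * r ^ (p - 2) = 1 := by
    rw [← Real.rpow_natCast, ← Real.rpow_add hr, ← Real.rpow_add hr]
    norm_num
  calc c ^ 4 = V₀ * r ^ (-p) * (c ^ 4 * r ^ 2) / V₀ * r ^ (p - 2) := by
        field_simp
        linear_combination (-c ^ 4) * hrpow
    _ ≤ (3 / 2 * k ^ 2 + |C| * (k ^ 4 * R ^ 2) ^ (1 / 3 : ℝ)) / V₀ * r ^ (p - 2) := by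
        gcongr
        linarith

end Pointwise

theorem affine_parameter_interval_bounded_general {C V₀ p k R : ℝ} {c v V : ℝ → ℝ}
    (hV₀ : 0 < V₀) (hp : 2 / 3 < p)
    (hcmeas : AEStronglyMeasurable c (volume.restrict (Ioo 0 R)))
    (hc : ∀ r ∈ Ioo 0 R, 0 ≤ c r)
    (hsupersonic : ∀ r ∈ Ioo 0 R, c r ≤ v r)
    (hmass : ∀ r ∈ Ioo 0 R, c r ^ 2 * v r * r = k)
    (hbern : ∀ r ∈ Ioo 0 R, 1 / 2 * v r ^ 2 + c r ^ 2 + V r = C)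
    (hV : ∀ r ∈ Ioo 0 R, V r ≤ -(V₀ * r ^ (-p))) :
    IntegrableOn (fun r ↦ c r ^ 3) (Ioo 0 R) := by
  have hexponent : -1 < (p - 2) * (3 / 4) := by linarith
  let K : ℝ := (3 / 2 * k ^ 2 + |C| * (k ^ 4 * R ^ 2) ^ (1 / 3 : ℝ)) / V₀
  have hfour : ∀ r ∈ Ioo 0 R, c r ^ 4 ≤ K * r ^ (p - 2) := fun r hr ↦
    pow_four_le_const_mul_rpow hV₀ hr.1 hr.2.le (hc r hr) (hsupersonic r hr) (hmass r hr)
      (by linarith [hbern r hr, hV r hr])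
  have hthree : ∀ r ∈ Ioo 0 R, ‖c r ^ 3‖ ≤ K ^ (3 / 4 : ℝ) * r ^ ((p - 2) * (3 / 4)) := by
    intro r hr
    rw [Real.norm_of_nonneg (pow_nonneg (hc r hr) 3)]
    exact pow_three_le_rpow_mul_rpow_of_pow_four_le (hc r hr) (by positivity) hr.1.le (hfour r hr)
  exact integrableOn_Ioo_of_norm_le_const_mul_rpow hexponent (hcmeas.pow 3) hthree

/-- Boundedness of the affine parameter interval (Eq. (8) of the paper, `dλ = c³ dr`):
for the transonic BEC flow the improper integral `∫₀^{r_T} c(r)³ dr` converges, so a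
radial null geodesic reaches arbitrarily close to the singularity `r = 0` within a
bounded affine interval. -/
theorem affine_parameter_interval_bounded (C₂ r₀ r_T : ℝ) (hr₀ : 0 < r₀)
    (hrT : 0 < r_T) (hrTr₀ : r_T < r₀)
    (c v : ℝ → ℝ)
    (hccont : ContinuousOn c (Set.Ioo 0 r₀)) (hvcont : ContinuousOn v (Set.Ioo 0 r₀))
    (hc : ∀ r ∈ Set.Ioo (0 : ℝ) r₀, 0 < c r)
    (hsupersonic : ∀ r ∈ Set.Ioo (0 : ℝ) r₀, c r < v r)
    (hmass : ∀ r ∈ Set.Ioo (0 : ℝ) r₀, (c r) ^ 2 * v r * r = 1)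
    (hbern : ∀ r ∈ Set.Ioo (0 : ℝ) r₀, (1 / 2) * (v r) ^ 2 + (c r) ^ 2 - 1 / r = C₂) :
    MeasureTheory.IntegrableOn (fun r => (c r) ^ 3) (Set.Ioo 0 r_T) :=
  (affine_parameter_interval_bounded_general (V := fun r ↦ -(1 / r)) one_pos
    (by norm_num : (2 / 3 : ℝ) < 1) (hccont.aestronglyMeasurable measurableSet_Ioo)
    (fun r hr ↦ (hc r hr).le) (fun r hr ↦ (hsupersonic r hr).le) hmass hbern
    (fun r _ ↦ by simp [Real.rpow_neg_one])).mono_set (Ioo_subset_Ioo_right hrTr₀.le)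
end

section
/- Let C₂ ∈ ℝ, r₀ > 0 and 0 < r_T < r₀, and let c, v : (0, r₀) → ℝ be continuous with, for all r ∈ (0, r₀): c(r) > 0, v(r) > c(r), c(r)² v(r) r = 1, and (1/2) v(r)² + c(r)² − 1/r = C₂. Then the improper integrals Δt₊ = ∫₀^{r_T} dr/(v(r) + c(r)) and Δt₋ = ∫₀^{r_T} dr/(v(r) − c(r)) both converge (are finite), and Δt₋ > Δt₊. -/
open MeasureTheory

/-!
Let `M = v / c` be the Mach number and `E r = C₂ - V r` the energy per unit mass available to the
flow at radius `r`. Eliminating `c` and `v` from the two conservation laws gives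
`(M² / 2 + 1)³ / M² = r² E³`, whose left-hand side is strictly increasing for `M > 1`. Hence `M`,
and with it `v = (M² / r)^(1/3)` and `c = v / M`, are continuous wherever `E` is, and `M → ∞` at
the origin as soon as `r² E³ → ∞` there; for `V = -1/r` this is `(1 + C₂ r)³ / r`. Then also
`v → ∞` and `v - c = v (1 - 1 / M) → ∞`, so the lab time density `1 / (v - c)` of the slower ray
tends to `0` at the origin.
-/

open Set Filter Topology

theorem continuousOn_of_comp_strictMonoOn {X α β : Type*} [TopologicalSpace X]
    [LinearOrder α] [TopologicalSpace α] [OrderTopology α]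
    [LinearOrder β] [TopologicalSpace β] [OrderTopology β]
    {f : α → β} {s : Set α} {u : X → α} {t : Set X} (hs : IsPreconnected s)
    (hf : ContinuousOn f s) (hmono : StrictMonoOn f s) (hu : MapsTo u t s)
    (hfu : ContinuousOn (f ∘ u) t) : ContinuousOn u t := by
  have : OrdConnected s := hs.ordConnected
  have hrange : OrdConnected (range (s.domRestrict f)) := by
    rw [range_domRestrict]
    exact (hs.image f hf).ordConnected
  have hemb : IsEmbedding (s.domRestrict f) := hmono.domRestrict.isEmbedding_of_ordConnected hrange
  have hrestrict : Continuous (hu.restrict u t s) :=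
    hemb.continuous_iff.2 (continuousOn_iff_continuous_domRestrict.1 hfu)
  exact continuousOn_iff_continuous_domRestrict.2 (continuous_subtype_val.comp hrestrict)

theorem tendsto_atTop_of_comp_strictMonoOn_Ioi {ι α β : Type*} [LinearOrder α] [NoMaxOrder α]
    [Preorder β] [NoMaxOrder β] {l : Filter ι} {f : α → β} {u : ι → α} {a : α}
    (hmono : StrictMonoOn f (Ioi a)) (hu : ∀ᶠ i in l, a < u i)
    (hfu : Tendsto (f ∘ u) l atTop) : Tendsto u l atTop := by
  obtain ⟨a', ha'⟩ := exists_gt a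
  refine tendsto_atTop.2 fun b ↦ ?_
  filter_upwards [hu, hfu.eventually_gt_atTop (f (max a' b))] with i hi hfi
  have hlt : max a' b < u i := (hmono.lt_iff_lt (ha'.trans_le (le_max_left a' b)) hi).1 hfi
  exact (le_max_right a' b).trans hlt.le

theorem integrableOn_Ioc_of_continuousOn_of_tendsto {F : Type*} [NormedAddCommGroup F]
    {μ : Measure ℝ} [IsLocallyFiniteMeasure μ] {f : ℝ → F} {a b : ℝ} {y : F}
    (hf : ContinuousOn f (Ioc a b)) (hlim : Tendsto f (𝓝[>] a) (𝓝 y)) :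
    IntegrableOn f (Ioc a b) μ := by
  rcases le_or_gt b a with hba | hab
  · simp [Ioc_eq_empty hba.not_gt]
  have hmeas : StronglyMeasurableAtFilter f (𝓝[>] a) μ :=
    ⟨Ioc a b, Ioc_mem_nhdsGT hab, hf.aestronglyMeasurable measurableSet_Ioc⟩
  have hfin : μ.FiniteAtFilter (𝓝[>] a) := μ.finiteAt_nhdsWithin a _
  obtain ⟨s, hs, hfs⟩ := hfin.integrableAtFilter_of_tendsto hmeas hlim
  obtain ⟨u, hau, hus⟩ := mem_nhdsGT_iff_exists_Ioc_subset.1 hs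
  have hcompact : IntegrableOn f (Icc u b) μ :=
    (hf.mono fun x hx ↦ ⟨hau.trans_le hx.1, hx.2⟩).integrableOn_Icc
  exact ((hfs.mono_set hus).union hcompact).mono_set fun x hx ↦
    (le_or_gt x u).imp (fun hxu ↦ ⟨hx.1, hxu⟩) fun hux ↦ ⟨hux.le, hx.2⟩

theorem setIntegral_lt_setIntegral_of_forall_lt {α : Type*} [MeasurableSpace α] {μ : Measure α}
    {s : Set α} {f g : α → ℝ} (hs : MeasurableSet s) (hμs : μ s ≠ 0) (hf : IntegrableOn f s μ)
    (hg : IntegrableOn g s μ) (hlt : ∀ x ∈ s, f x < g x) :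
    ∫ x in s, f x ∂μ < ∫ x in s, g x ∂μ := by
  have hnonneg : 0 ≤ᵐ[μ.restrict s] fun x ↦ g x - f x :=
    ae_restrict_of_forall_mem hs fun x hx ↦ (sub_pos.2 (hlt x hx)).le
  have hsupport : s ⊆ Function.support fun x ↦ g x - f x :=
    fun x hx ↦ (sub_pos.2 (hlt x hx)).ne'
  rw [← sub_pos, ← integral_sub hg hf,
    setIntegral_pos_iff_support_of_nonneg_ae hnonneg (hg.sub hf), inter_eq_right.2 hsupport]
  exact pos_iff_ne_zero.2 hμs

/-- The value that `r² E³` takes in a stationary radial flow with `γ = 2` at a point of Mach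
number `M`; see `IsSupersonicAt.machInvariant_eq`. -/
noncomputable def machInvariant (M : ℝ) : ℝ := (M ^ 2 / 2 + 1) ^ 3 / M ^ 2

theorem continuousOn_machInvariant : ContinuousOn machInvariant (Ioi 1) :=
  ContinuousOn.div (by fun_prop) (by fun_prop) fun _M hM ↦
    pow_ne_zero 2 (zero_lt_one.trans hM).ne'

theorem strictMonoOn_machInvariant : StrictMonoOn machInvariant (Ioi 1) := by
  intro M (hM : 1 < M) N _ hMN
  have hx : 1 < M ^ 2 := one_lt_pow₀ hM two_ne_zero
  have hxy : M ^ 2 < N ^ 2 := pow_lt_pow_left₀ hMN (zero_le_one.trans hM.le) two_ne_zero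
  simp only [machInvariant]
  generalize M ^ 2 = x at *
  generalize N ^ 2 = y at *
  have hxy₁ : 1 < x * y := one_lt_mul_of_lt_of_le hx (hx.trans hxy).le
  have hfactor : 0 < (y - x) * (x * y * (x + y) + 6 * (x * y) - 8) :=
    mul_pos (sub_pos.2 hxy) (by nlinarith)
  rw [div_lt_div_iff₀ (by linarith) (by linarith)]
  linear_combination (1 / 8) * hfactor

/-- The stationary radial flow equations for `γ = 2` at a single radius `r` where the flow speed
`v` exceeds the sound speed `c`. Here `E` stands for `C₂ - V r`, the Bernoulli constant minus the
external potential, and the mass flux is normalized to `c² v r = 1`. -/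
structure IsSupersonicAt (E r c v : ℝ) : Prop where
  sound_pos : 0 < c
  sound_lt : c < v
  mass_flux : c ^ 2 * v * r = 1
  bernoulli : v ^ 2 / 2 + c ^ 2 = E

namespace IsSupersonicAt

section Pointwise

variable {E r c v : ℝ} (h : IsSupersonicAt E r c v)
include h

theorem speed_pos : 0 < v := h.sound_pos.trans h.sound_lt

theorem radius_pos : 0 < r := by
  have hc := h.sound_pos
  have hv := h.speed_pos
  exact pos_of_mul_pos_right (h.mass_flux ▸ one_pos) (by positivity)

theorem one_lt_mach : 1 < v / c := (one_lt_div h.sound_pos).2 h.sound_lt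

theorem machInvariant_eq : machInvariant (v / c) = r ^ 2 * E ^ 3 := by
  have hc := h.sound_pos.ne'
  have hv := h.speed_pos.ne'
  have hr : r = 1 / (c ^ 2 * v) := by
    rw [eq_div_iff (by positivity), mul_comm]
    exact h.mass_flux
  rw [machInvariant, hr, ← h.bernoulli]
  field_simp

theorem speed_eq : v = ((v / c) ^ 2 / r) ^ (1 / 3 : ℝ) := by
  have hc := h.sound_pos.ne'
  have hr := h.radius_pos.ne'
  have hcube : (v / c) ^ 2 / r = v ^ 3 := by
    field_simp
    linear_combination (-v ^ 2) * h.mass_flux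
  rw [hcube, ← Real.rpow_natCast, ← Real.rpow_mul h.speed_pos.le]
  norm_num

theorem speed_sub_sound_eq : v - c = v * (1 - (v / c)⁻¹) := by
  have hv := h.speed_pos.ne'
  field_simp

theorem speed_sub_sound_pos : 0 < v - c := sub_pos.2 h.sound_lt

theorem speed_add_sound_pos : 0 < v + c := add_pos h.speed_pos h.sound_pos

theorem one_div_speed_add_sound_lt : 1 / (v + c) < 1 / (v - c) :=
  one_div_lt_one_div_of_lt h.speed_sub_sound_pos (by linarith [h.sound_pos])

end Pointwise

variable {E c v : ℝ → ℝ}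

section Continuity

variable {s : Set ℝ} (hE : ContinuousOn E s) (h : ∀ r ∈ s, IsSupersonicAt (E r) r (c r) (v r))
include hE h

theorem continuousOn_mach : ContinuousOn (fun r ↦ v r / c r) s := by
  refine continuousOn_of_comp_strictMonoOn isPreconnected_Ioi continuousOn_machInvariant
    strictMonoOn_machInvariant (fun r hr ↦ (h r hr).one_lt_mach) ?_
  exact ((continuousOn_id.pow 2).mul (hE.pow 3)).congr fun r hr ↦ (h r hr).machInvariant_eq

theorem continuousOn_speed : ContinuousOn v s := by
  have hcube : ContinuousOn (fun r ↦ (v r / c r) ^ 2 / r) s :=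
    ((continuousOn_mach hE h).pow 2).div continuousOn_id fun r hr ↦ (h r hr).radius_pos.ne'
  exact (hcube.rpow_const fun _ _ ↦ Or.inr (by norm_num)).congr fun r hr ↦ (h r hr).speed_eq

theorem continuousOn_sound : ContinuousOn c s := by
  refine ((continuousOn_speed hE h).div (continuousOn_mach hE h) fun r hr ↦ ?_).congr
    fun r hr ↦ (div_div_cancel₀ (h r hr).speed_pos.ne').symm
  exact (zero_lt_one.trans (h r hr).one_lt_mach).ne'

end Continuity

section Origin

variable (hE : Tendsto (fun r ↦ r ^ 2 * E r ^ 3) (𝓝[>] 0) atTop)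
  (h : ∀ᶠ r in 𝓝[>] 0, IsSupersonicAt (E r) r (c r) (v r))
include hE h

theorem tendsto_mach_atTop : Tendsto (fun r ↦ v r / c r) (𝓝[>] 0) atTop :=
  tendsto_atTop_of_comp_strictMonoOn_Ioi strictMonoOn_machInvariant
    (h.mono fun _r hr ↦ hr.one_lt_mach)
    (hE.congr' (h.mono fun _r hr ↦ hr.machInvariant_eq.symm))

theorem tendsto_speed_atTop : Tendsto v (𝓝[>] 0) atTop := by
  have hmach : Tendsto (fun r ↦ (v r / c r) ^ 2) (𝓝[>] 0) atTop :=
    (tendsto_pow_atTop two_ne_zero).comp (tendsto_mach_atTop hE h)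
  have hcube : Tendsto (fun r ↦ (v r / c r) ^ 2 / r) (𝓝[>] 0) atTop :=
    hmach.atTop_mul_atTop₀ tendsto_inv_nhdsGT_zero
  exact ((tendsto_rpow_atTop (by norm_num)).comp hcube).congr'
    (h.mono fun _r hr ↦ hr.speed_eq.symm)

theorem tendsto_speed_sub_sound_atTop : Tendsto (fun r ↦ v r - c r) (𝓝[>] 0) atTop := by
  have hratio : Tendsto (fun r ↦ 1 - (v r / c r)⁻¹) (𝓝[>] 0) (𝓝 1) := by
    simpa using (tendsto_mach_atTop hE h).inv_tendsto_atTop.const_sub 1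
  exact ((tendsto_speed_atTop hE h).atTop_mul_pos one_pos hratio).congr'
    (h.mono fun _r hr ↦ hr.speed_sub_sound_eq.symm)

end Origin

section LabTime

variable {a : ℝ} (hEcont : ContinuousOn E (Ioc 0 a))
  (hEorigin : Tendsto (fun r ↦ r ^ 2 * E r ^ 3) (𝓝[>] 0) atTop)
  (h : ∀ r ∈ Ioc 0 a, IsSupersonicAt (E r) r (c r) (v r))
include hEcont hEorigin h

theorem integrableOn_one_div_speed_sub_sound :
    IntegrableOn (fun r ↦ 1 / (v r - c r)) (Ioc 0 a) := by
  rcases le_or_gt a 0 with ha | ha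
  · simp [Ioc_eq_empty ha.not_gt]
  have hcont : ContinuousOn (fun r ↦ 1 / (v r - c r)) (Ioc 0 a) :=
    continuousOn_const.div ((continuousOn_speed hEcont h).sub (continuousOn_sound hEcont h))
      fun r hr ↦ (h r hr).speed_sub_sound_pos.ne'
  have hgap : Tendsto (fun r ↦ v r - c r) (𝓝[>] 0) atTop :=
    tendsto_speed_sub_sound_atTop hEorigin (eventually_of_mem (Ioc_mem_nhdsGT ha) h)
  exact integrableOn_Ioc_of_continuousOn_of_tendsto hcont (hgap.const_div_atTop 1)

theorem integrableOn_one_div_speed_add_sound :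
    IntegrableOn (fun r ↦ 1 / (v r + c r)) (Ioc 0 a) := by
  have hcont : ContinuousOn (fun r ↦ 1 / (v r + c r)) (Ioc 0 a) :=
    continuousOn_const.div ((continuousOn_speed hEcont h).add (continuousOn_sound hEcont h))
      fun r hr ↦ (h r hr).speed_add_sound_pos.ne'
  refine (integrableOn_one_div_speed_sub_sound hEcont hEorigin h).mono'
    (hcont.aestronglyMeasurable measurableSet_Ioc)
    (ae_restrict_of_forall_mem measurableSet_Ioc fun r hr ↦ ?_)
  rw [Real.norm_of_nonneg (one_div_pos.2 (h r hr).speed_add_sound_pos).le]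
  exact (h r hr).one_div_speed_add_sound_lt.le

end LabTime

end IsSupersonicAt

theorem tendsto_sq_mul_newtonian_energy_cube (C : ℝ) :
    Tendsto (fun r : ℝ ↦ r ^ 2 * (C + 1 / r) ^ 3) (𝓝[>] 0) atTop := by
  have hlim : Tendsto (fun r : ℝ ↦ (1 + C * r) ^ 3) (𝓝[>] 0) (𝓝 1) :=
    (Continuous.tendsto' (by fun_prop) 0 1 (by simp)).mono_left nhdsWithin_le_nhds
  refine (tendsto_inv_nhdsGT_zero.atTop_mul_pos one_pos hlim).congr'
    (eventually_of_mem self_mem_nhdsWithin fun r (hr : 0 < r) ↦ ?_)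
  field_simp
  ring

theorem lab_time_to_singularity_finite_general {r_T : ℝ} (hrT : 0 < r_T) {E c v : ℝ → ℝ}
    (hEcont : ContinuousOn E (Ioc 0 r_T))
    (hEorigin : Tendsto (fun r ↦ r ^ 2 * E r ^ 3) (𝓝[>] 0) atTop)
    (hflow : ∀ r ∈ Ioc 0 r_T, IsSupersonicAt (E r) r (c r) (v r)) :
    IntegrableOn (fun r ↦ 1 / (v r + c r)) (Ioo 0 r_T) ∧
    IntegrableOn (fun r ↦ 1 / (v r - c r)) (Ioo 0 r_T) ∧
    (∫ r in Ioo 0 r_T, 1 / (v r + c r)) < ∫ r in Ioo 0 r_T, 1 / (v r - c r) := by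
  have hplus : IntegrableOn (fun r ↦ 1 / (v r + c r)) (Ioo 0 r_T) :=
    (IsSupersonicAt.integrableOn_one_div_speed_add_sound hEcont hEorigin hflow).mono_set
      Ioo_subset_Ioc_self
  have hminus : IntegrableOn (fun r ↦ 1 / (v r - c r)) (Ioo 0 r_T) :=
    (IsSupersonicAt.integrableOn_one_div_speed_sub_sound hEcont hEorigin hflow).mono_set
      Ioo_subset_Ioc_self
  exact ⟨hplus, hminus, setIntegral_lt_setIntegral_of_forall_lt measurableSet_Ioo
    (by simpa using hrT) hplus hminus
    fun r hr ↦ (hflow r (Ioo_subset_Ioc_self hr)).one_div_speed_add_sound_lt⟩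

/-- Eq. (reachingS) of the Supplemental Material: the laboratory times
`Δt₊ = ∫₀^{r_T} dr/(v+c)` and `Δt₋ = ∫₀^{r_T} dr/(v-c)` for radially out/inward
pointing null rays to reach the origin from the trapped surface are both finite,
and `Δt₋ > Δt₊`. -/
theorem lab_time_to_singularity_finite (C₂ r₀ r_T : ℝ) (hr₀ : 0 < r₀)
    (hrT : 0 < r_T) (hrTr₀ : r_T < r₀)
    (c v : ℝ → ℝ)
    (hccont : ContinuousOn c (Set.Ioo 0 r₀)) (hvcont : ContinuousOn v (Set.Ioo 0 r₀))
    (hc : ∀ r ∈ Set.Ioo (0 : ℝ) r₀, 0 < c r)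
    (hsupersonic : ∀ r ∈ Set.Ioo (0 : ℝ) r₀, c r < v r)
    (hmass : ∀ r ∈ Set.Ioo (0 : ℝ) r₀, (c r) ^ 2 * v r * r = 1)
    (hbern : ∀ r ∈ Set.Ioo (0 : ℝ) r₀, (1 / 2) * (v r) ^ 2 + (c r) ^ 2 - 1 / r = C₂) :
    IntegrableOn (fun r => 1 / (v r + c r)) (Set.Ioo 0 r_T) ∧
    IntegrableOn (fun r => 1 / (v r - c r)) (Set.Ioo 0 r_T) ∧
    (∫ r in Set.Ioo 0 r_T, 1 / (v r + c r)) < ∫ r in Set.Ioo 0 r_T, 1 / (v r - c r) := by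
  have hflow (r) (hr : r ∈ Ioc 0 r_T) : IsSupersonicAt (C₂ + 1 / r) r (c r) (v r) :=
    have hr' : r ∈ Ioo 0 r₀ := ⟨hr.1, hr.2.trans_lt hrTr₀⟩
    ⟨hc r hr', hsupersonic r hr', hmass r hr', by linear_combination hbern r hr'⟩
  exact lab_time_to_singularity_finite_general hrT
    (continuousOn_const.add (continuousOn_const.div continuousOn_id fun r hr ↦ hr.1.ne'))
    (tendsto_sq_mul_newtonian_energy_cube C₂) hflow
end

section
/- Let C₂ ∈ ℝ and r₀ > 0, and let c, v : (0, r₀) → ℝ satisfy, for all r ∈ (0, r₀): c(r) > 0, v(r) > c(r), c(r)² v(r) r = 1, and (1/2) v(r)² + c(r)² − 1/r = C₂. Define the Mach number M(r) = v(r)/c(r) and the null expansion Θ(r) = (1/2) ( −M(r) + ( 1/M(r) − 1/(r v(r) c(r)) ) / ( 1 − 1/M(r)² ) ). Then Θ(r) → −∞ as r → 0⁺. -/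
/-!
Since `c ≤ v`, a Bernoulli function bounded below by `C` forces `(3/2) v² ≥ 1/r + C`, so `v → ∞`
while `r v²` stays bounded away from `0`. Hence `r v³ → ∞`, and a mass flux `c² v r ≤ J` gives
`r v³ ≤ J M²`, so `M → ∞`. In `Θ` the term `1/(r v c)` is nonnegative and `(1/M)/(1 - 1/M²) ≤ 1` for
`M ≥ 2`, so `Θ ≤ (1 - M)/2 → -∞`.
-/

open Filter

open scoped Topology

theorem tendsto_atTop_of_tendsto_pow_atTop {α R : Type*} [Ring R] [LinearOrder R]
    [IsStrictOrderedRing R] {l : Filter α} {f : α → R} {n : ℕ} (hf : ∀ᶠ x in l, 0 ≤ f x)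
    (h : Tendsto (fun x => f x ^ n) l atTop) : Tendsto f l atTop := by
  refine tendsto_atTop.2 fun b => ?_
  filter_upwards [hf, h.eventually_gt_atTop (|b| ^ n)] with x hx hbx
  exact (le_abs_self b).trans (lt_of_pow_lt_pow_left₀ n hx hbx).le

/-- The null expansion `Θ` of the radial null geodesic congruences (`l = 0`, affine parametrization)
at radius `r`, for sound speed `c` and flow speed `v`. The Mach number `M` is written `v / c`, and
the quotient in `Θ` is `(r / c) dv/dr` after eliminating `dv/dr` by the flow equation; it takes the
junk value `0` at the horizon `M = 1`. -/
def nullExpansion {𝕜 : Type*} [Field 𝕜] (r c v : 𝕜) : 𝕜 :=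
  (1 / 2) * (-(v / c) + (1 / (v / c) - 1 / (r * v * c)) / (1 - 1 / (v / c) ^ 2))

section Pointwise

variable {𝕜 : Type*} [Field 𝕜] [LinearOrder 𝕜] [IsStrictOrderedRing 𝕜] {r c v C J : 𝕜}

theorem mul_pow_three_le_mul_mach_sq (hc : c ≠ 0) (hflux : c ^ 2 * v * r ≤ J) :
    r * v ^ 3 ≤ J * (v / c) ^ 2 :=
  calc r * v ^ 3 = c ^ 2 * v * r * (v / c) ^ 2 := by field_simp
    _ ≤ J * (v / c) ^ 2 := by gcongr

theorem bernoulli_le_velocity_sq (hc : 0 ≤ c) (hcv : c ≤ v)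
    (hbern : C ≤ (1 / 2) * v ^ 2 + c ^ 2 - 1 / r) : 2 / 3 * (r⁻¹ + C) ≤ v ^ 2 := by
  have hsq : c ^ 2 ≤ v ^ 2 := by gcongr
  rw [one_div r] at hbern
  linarith

theorem nullExpansion_le (hpos : 0 ≤ r * v * c) (hmach : 2 ≤ v / c) :
    nullExpansion r c v ≤ 1 / 2 * (1 - v / c) := by
  have hinv : 1 / (v / c) ≤ 1 / 2 := one_div_le_one_div_of_le two_pos hmach
  have hinv_sq : 1 / (v / c) ^ 2 ≤ 1 / 2 ^ 2 := by gcongr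
  have hflow : (1 / (v / c) - 1 / (r * v * c)) / (1 - 1 / (v / c) ^ 2) ≤ 1 := by
    have : 0 ≤ 1 / (r * v * c) := one_div_nonneg.2 hpos
    rw [div_le_one (by linarith)]
    linarith
  unfold nullExpansion
  linarith

end Pointwise

section Limits

variable {α 𝕜 : Type*} [Field 𝕜] [LinearOrder 𝕜] [IsStrictOrderedRing 𝕜]
  {l : Filter α} {r c v : α → 𝕜} {C J : 𝕜}

theorem tendsto_nullExpansion_atBot (hpos : ∀ᶠ x in l, 0 ≤ r x * v x * c x)
    (hmach : Tendsto (fun x => v x / c x) l atTop) :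
    Tendsto (fun x => nullExpansion (r x) (c x) (v x)) l atBot := by
  have hbound : Tendsto (fun x => 1 / 2 * (1 - v x / c x)) l atBot :=
    (tendsto_atBot_add_const_left l 1 (tendsto_neg_atTop_atBot.comp hmach)).const_mul_atBot
      one_half_pos |>.congr fun x => by simp [sub_eq_add_neg]
  refine tendsto_atBot_mono' l ?_ hbound
  filter_upwards [hpos, hmach.eventually_ge_atTop 2] with x using nullExpansion_le

variable [TopologicalSpace 𝕜] [OrderTopology 𝕜]

theorem tendsto_velocity_atTop (hr : Tendsto r l (𝓝[>] 0)) (hc : ∀ᶠ x in l, 0 ≤ c x)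
    (hcv : ∀ᶠ x in l, c x ≤ v x)
    (hbern : ∀ᶠ x in l, C ≤ (1 / 2) * v x ^ 2 + c x ^ 2 - 1 / r x) :
    Tendsto v l atTop := by
  have hbound : Tendsto (fun x => 2 / 3 * ((r x)⁻¹ + C)) l atTop :=
    (tendsto_atTop_add_const_right l C hr.inv_tendsto_nhdsGT_zero).const_mul_atTop (by norm_num)
  have hv : ∀ᶠ x in l, 0 ≤ v x := by
    filter_upwards [hc, hcv] with x using le_trans
  have hle : ∀ᶠ x in l, 2 / 3 * ((r x)⁻¹ + C) ≤ v x ^ 2 := by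
    filter_upwards [hc, hcv, hbern] with x using bernoulli_le_velocity_sq
  exact tendsto_atTop_of_tendsto_pow_atTop hv (tendsto_atTop_mono' l hle hbound)

theorem tendsto_mul_velocity_pow_three_atTop (hr : Tendsto r l (𝓝[>] 0))
    (hc : ∀ᶠ x in l, 0 ≤ c x) (hcv : ∀ᶠ x in l, c x ≤ v x)
    (hbern : ∀ᶠ x in l, C ≤ (1 / 2) * v x ^ 2 + c x ^ 2 - 1 / r x) :
    Tendsto (fun x => r x * v x ^ 3) l atTop := by
  have hr₀ : Tendsto r l (𝓝 0) := hr.mono_right nhdsWithin_le_nhds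
  have hfactor : Tendsto (fun x => 2 / 3 * (1 + C * r x)) l (𝓝 (2 / 3)) := by
    simpa using ((hr₀.const_mul C).const_add 1).const_mul (2 / 3)
  have hbound : Tendsto (fun x => v x * (2 / 3 * (1 + C * r x))) l atTop :=
    (tendsto_velocity_atTop hr hc hcv hbern).atTop_mul_pos (by norm_num) hfactor
  refine tendsto_atTop_mono' l ?_ hbound
  filter_upwards [hr self_mem_nhdsWithin, hc, hcv, hbern] with x (hrx : 0 < r x) hcx hcvx hbernx
  have hv : 0 ≤ v x := hcx.trans hcvx
  calc v x * (2 / 3 * (1 + C * r x)) = r x * v x * (2 / 3 * ((r x)⁻¹ + C)) := by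
        field_simp
    _ ≤ r x * v x * v x ^ 2 := by
        gcongr
        exact bernoulli_le_velocity_sq hcx hcvx hbernx
    _ = r x * v x ^ 3 := by ring

theorem tendsto_mach_atTop (hJ : 0 < J) (hr : Tendsto r l (𝓝[>] 0)) (hc : ∀ᶠ x in l, 0 < c x)
    (hcv : ∀ᶠ x in l, c x ≤ v x) (hflux : ∀ᶠ x in l, c x ^ 2 * v x * r x ≤ J)
    (hbern : ∀ᶠ x in l, C ≤ (1 / 2) * v x ^ 2 + c x ^ 2 - 1 / r x) :
    Tendsto (fun x => v x / c x) l atTop := by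
  have hmach : ∀ᶠ x in l, 0 ≤ v x / c x := by
    filter_upwards [hc, hcv] with x hcx hcvx using div_nonneg (hcx.le.trans hcvx) hcx.le
  have hmach_sq : Tendsto (fun x => J * (v x / c x) ^ 2) l atTop := by
    refine tendsto_atTop_mono' l ?_
      (tendsto_mul_velocity_pow_three_atTop hr (hc.mono fun _ => le_of_lt) hcv hbern)
    filter_upwards [hc, hflux] with x hcx using mul_pow_three_le_mul_mach_sq hcx.ne'
  exact tendsto_atTop_of_tendsto_pow_atTop hmach (hmach_sq.atTop_of_const_mul₀ hJ)

theorem null_expansion_diverges_at_singularity_general (hJ : 0 < J) (hr : Tendsto r l (𝓝[>] 0))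
    (hc : ∀ᶠ x in l, 0 < c x) (hcv : ∀ᶠ x in l, c x ≤ v x)
    (hflux : ∀ᶠ x in l, c x ^ 2 * v x * r x ≤ J)
    (hbern : ∀ᶠ x in l, C ≤ (1 / 2) * v x ^ 2 + c x ^ 2 - 1 / r x) :
    Tendsto (fun x => nullExpansion (r x) (c x) (v x)) l atBot := by
  refine tendsto_nullExpansion_atBot ?_ (tendsto_mach_atTop hJ hr hc hcv hflux hbern)
  filter_upwards [hr self_mem_nhdsWithin, hc, hcv] with x (hrx : 0 < r x) hcx hcvx
  have hv : 0 < v x := hcx.trans_le hcvx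
  positivity

end Limits

/-- The null expansion of the radial null geodesic congruences in the BEC analogue
black hole, `Θ = (1/2)(-M + (1/M - 1/(r v c))/(1 - 1/M²))` with Mach number `M = v/c`,
tends to `-∞` as `r → 0⁺`, identifying `r = 0` as a caustic. -/
theorem null_expansion_diverges_at_singularity (C₂ r₀ : ℝ) (hr₀ : 0 < r₀)
    (c v : ℝ → ℝ)
    (hc : ∀ r ∈ Set.Ioo (0 : ℝ) r₀, 0 < c r)
    (hsupersonic : ∀ r ∈ Set.Ioo (0 : ℝ) r₀, c r < v r)
    (hmass : ∀ r ∈ Set.Ioo (0 : ℝ) r₀, (c r) ^ 2 * v r * r = 1)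
    (hbern : ∀ r ∈ Set.Ioo (0 : ℝ) r₀, (1 / 2) * (v r) ^ 2 + (c r) ^ 2 - 1 / r = C₂) :
    Tendsto (fun r =>
        (1 / 2) * (-(v r / c r)
          + (1 / (v r / c r) - 1 / (r * v r * c r)) / (1 - 1 / (v r / c r) ^ 2)))
      (nhdsWithin 0 (Set.Ioi 0)) atBot := by
  have hnear : ∀ᶠ r in 𝓝[>] (0 : ℝ), r ∈ Set.Ioo 0 r₀ := Ioo_mem_nhdsGT hr₀
  exact null_expansion_diverges_at_singularity_general one_pos tendsto_id (hnear.mono hc)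
    (hnear.mono fun r hr => (hsupersonic r hr).le) (hnear.mono fun r hr => (hmass r hr).le)
    (hnear.mono fun r hr => (hbern r hr).ge)
end
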